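/- arXiv:2605.10883 — 5 statements merged into one kernel-verified Lean document; each statement's English description precedes it below -/
import Mathlib

section
/- Let a, b be integers with b > a ≥ 2. Suppose f₂(π/a, 0) > 0 and there exists α̂₁ in the α₁-interval of D with α̂₁ < π/a such that f₂(α̂₁, 0) ≤ 0. Then the edge-condition system f₁(α₁,β₁) = 0, f₂(α₁,β₁) = 0 has exactly one solution (α₁, β₁) in D. -/
open Real

/-- `B₀₀ = 1 − cos²α₁ − cos²α₂ − cos²β₁ − 2·cos α₁·cos α₂·cos β₁` with `α₂ = 2π/a − 2α₁`. -/
noncomputable def B00 (a : ℤ) (α₁ β₁ : ℝ) : ℝ :=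
  1 - cos α₁ ^ 2 - cos (2 * π / (a : ℝ) - 2 * α₁) ^ 2 - cos β₁ ^ 2
    - 2 * cos α₁ * cos (2 * π / (a : ℝ) - 2 * α₁) * cos β₁

/-- `B₁₁ = 1 − cos²α₁ − cos²β₁ − cos²β₂ − 2·cos α₁·cos β₁·cos β₂` with `β₂ = 2π/b − 2β₁`. -/
noncomputable def B11 (b : ℤ) (α₁ β₁ : ℝ) : ℝ :=
  1 - cos α₁ ^ 2 - cos β₁ ^ 2 - cos (2 * π / (b : ℝ) - 2 * β₁) ^ 2
    - 2 * cos α₁ * cos β₁ * cos (2 * π / (b : ℝ) - 2 * β₁)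

/-- `f₁(α₁,β₁) = B₀₀·sin²β₁ − B₁₁·sin²α₂`. -/
noncomputable def f1 (a b : ℤ) (α₁ β₁ : ℝ) : ℝ :=
  B00 a α₁ β₁ * sin β₁ ^ 2 - B11 b α₁ β₁ * sin (2 * π / (a : ℝ) - 2 * α₁) ^ 2

/-- `f₂(α₁,β₁) = B₁₁·sin²α₁ − B₀₀·sin²β₂`. -/
noncomputable def f2 (a b : ℤ) (α₁ β₁ : ℝ) : ℝ :=
  B11 b α₁ β₁ * sin α₁ ^ 2 - B00 a α₁ β₁ * sin (2 * π / (b : ℝ) - 2 * β₁) ^ 2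

/-- The `α₁`-interval of the domain `D`. -/
noncomputable def alphaI (a : ℤ) : Set ℝ :=
  if a = 2 then Set.Icc (π / 3) (π / 2)
  else if a = 3 then Set.Icc (π / 12) (π / 3)
  else Set.Icc 0 (π / (a : ℝ))

/-- The domain `D ⊂ ℝ²`. -/
noncomputable def Dom (a b : ℤ) : Set (ℝ × ℝ) :=
  alphaI a ×ˢ Set.Icc 0 (π / (b : ℝ))

lemma f2_zero (a b : ℤ) (x : ℝ) : f2 a b x 0 =
    ((cos x + cos (2 * (π / (a : ℝ)) - 2 * x)) * sin (2 * (π / (b : ℝ)))) ^ 2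
      - ((cos x + cos (2 * (π / (b : ℝ)))) * sin x) ^ 2 := by
  simp only [f2, B00, B11, mul_div_assoc, cos_zero, mul_zero, sub_zero]
  ring

/-- key inequality for `A ≤ π/4`. -/
lemma key4 (A x w : ℝ) (hx : 0 ≤ x) (hxA : x ≤ A) (hA : A ≤ π / 4) (hw0 : 0 ≤ w) (hw1 : w ≤ 1) :
    sin x * (cos x + w) * (1 + cos A) ≤ sin A * (cos A + w) * (cos x + cos (2 * A - 2 * x)) := by
  have hpi := pi_pos
  have e2 : cos (2 * A - 2 * x) = 1 - 2 * sin (A - x) ^ 2 := by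
    rw [show 2 * A - 2 * x = 2 * (A - x) by ring, cos_two_mul, cos_sq']; ring
  have hs : sin (A - x) = sin A * cos x - cos A * sin x := sin_sub A x
  have hs0 : 0 ≤ sin (A - x) := sin_nonneg_of_nonneg_of_le_pi (by linarith) (by linarith)
  have hk : cos (A + x) = cos A * cos x - sin A * sin x := cos_add A x
  have hks : sin (A - x) ≤ cos (A + x) := by
    rw [← cos_pi_div_two_sub]
    exact cos_le_cos_of_nonneg_of_le_pi (by linarith) (by linarith) (by linarith)
  have hsA : sin (A - x) ≤ sin A := sin_le_sin_of_le_of_le_pi_div_two (by linarith) (by linarith) (by linarith)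
  have hcA : cos A ≤ cos x := cos_le_cos_of_nonneg_of_le_pi hx (by linarith) hxA
  have hSA0 : 0 ≤ sin A := sin_nonneg_of_nonneg_of_le_pi (by linarith) (by linarith)
  have hSC : sin A ≤ cos A := by
    rw [← cos_pi_div_two_sub]
    exact cos_le_cos_of_nonneg_of_le_pi (by linarith) (by linarith) (by linarith)
  have pA := sin_sq_add_cos_sq A
  have px := sin_sq_add_cos_sq x
  have hc1 : cos A ≤ 1 := cos_le_one A
  have hdiff : sin A - sin x = sin A * (1 - cos (A - x)) + cos A * sin (A - x) := by
    have : sin x = sin (A - (A - x)) := by ring_nf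
    rw [this, sin_sub A (A - x)]; ring
  have hct := cos_le_one (A - x)
  rw [e2]
  generalize sin (A - x) = s at *
  generalize cos (A - x) = ct at *
  generalize cos (A + x) = k at *
  generalize sin A = SA at *
  generalize cos A = CA at *
  generalize sin x = sx at *
  generalize cos x = cx at *
  have E0 : 0 ≤ SA * CA * (cx + (1 - 2 * s ^ 2)) - sx * cx * (1 + CA) := by
    have h1 : SA * CA - sx * cx = k * s := by
      rw [hk, hs]; linear_combination (sx * cx) * pA - (SA * CA) * px
    have h2 : s * s ≤ k * s := mul_le_mul_of_nonneg_right hks hs0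
    have h3 : 2 * (SA * CA) ≤ 1 := by nlinarith [sq_nonneg (SA - CA)]
    have h4 : 0 ≤ SA * CA := mul_nonneg hSA0 (by linarith)
    have h5 : 0 ≤ SA * CA * (cx - CA) := mul_nonneg h4 (by linarith)
    have h6 : 0 ≤ (1 + CA) * (k * s - s * s) := mul_nonneg (by linarith) (by linarith)
    have h7 : 0 ≤ s ^ 2 * (1 + CA - 2 * (SA * CA)) := mul_nonneg (sq_nonneg _) (by linarith)
    have : SA * CA * (cx + (1 - 2 * s ^ 2)) - sx * cx * (1 + CA)
      = (1 + CA) * (k * s) - SA * CA * 2 * s ^ 2 + SA * CA * (cx - CA) := by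
      rw [← h1]; ring
    nlinarith
  have E1 : 0 ≤ SA * (cx + (1 - 2 * s ^ 2)) - sx * (1 + cx) := by
    have h1 : CA * s ≤ SA - sx := by
      have := mul_nonneg hSA0 (sub_nonneg.2 hct); linarith
    have h2 : 0 ≤ (1 + cx) * (SA - sx - CA * s) := mul_nonneg (by linarith) (by linarith)
    have h3 : 2 * SA * s ≤ (1 + cx) * CA := by nlinarith
    have h4 := mul_le_mul_of_nonneg_right h3 hs0
    nlinarith
  have E1' := mul_nonneg (mul_nonneg hw0 E1) (show 0 ≤ 1 + CA by linarith)
  have E0' := mul_nonneg (sub_nonneg.2 hw1) E0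
  nlinarith

/-- key inequality for `A = π/3`. -/
lemma key3 (x w : ℝ) (hxA : x ≤ π / 3) (hx : π / 12 ≤ x) (hw0 : 1 / 2 ≤ w) (hw1 : w ≤ 1) :
    sin x * (cos x + w) * (1 + 1 / 2)
      ≤ √3 / 2 * (1 / 2 + w) * (cos x + cos (2 * (π / 3) - 2 * x)) := by
  have hpi := pi_pos
  have h3 : √3 * √3 = 3 := mul_self_sqrt (by norm_num)
  have h30 : 0 ≤ √3 := sqrt_nonneg 3
  obtain ⟨t, rfl⟩ : ∃ t, x = π / 3 - t := ⟨π / 3 - x, by ring⟩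
  have hs0 : 0 ≤ sin t := sin_nonneg_of_nonneg_of_le_pi (by linarith) (by linarith)
  have pt := sin_sq_add_cos_sq t
  have hc1 := cos_le_one t
  rw [show 2 * (π / 3) - 2 * (π / 3 - t) = 2 * t by ring, cos_two_mul, sin_sub, cos_sub,
    sin_pi_div_three, cos_pi_div_three]
  generalize sin t = s at *
  generalize cos t = c at *
  have q1 : c / 2 + √3 / 2 * s ≤ 1 := by nlinarith [sq_nonneg (√3 / 2 * c - s / 2)]
  have q2 : 3 / 4 * c + √3 / 4 * s ≤ 9 / 8 := by nlinarith [sq_nonneg (√3 * s - c)]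
  have F0 : 0 ≤ √3 / 8 * (1 - c) + s * (9 / 8 - (3 / 4 * c + √3 / 4 * s)) :=
    add_nonneg (mul_nonneg (by positivity) (by linarith)) (mul_nonneg hs0 (by linarith))
  have F1 : 0 ≤ √3 / 4 * (1 - c) + s * (5 / 4 - (c / 2 + √3 / 2 * s)) :=
    add_nonneg (mul_nonneg (by positivity) (by linarith)) (mul_nonneg hs0 (by linarith))
  have G0 := mul_nonneg (sub_nonneg.2 hw1) F0
  have G1 := mul_nonneg (sub_nonneg.2 hw0) F1
  have hc : c ^ 2 = 1 - s ^ 2 := by linarith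
  have : √3 / 2 * (1 / 2 + w) * (1 / 2 * c + √3 / 2 * s + (2 * c ^ 2 - 1))
      - (√3 / 2 * c - 1 / 2 * s) * (1 / 2 * c + √3 / 2 * s + w) * (1 + 1 / 2)
      = 2 * ((1 - w) * (√3 / 8 * (1 - c) + s * (9 / 8 - (3 / 4 * c + √3 / 4 * s))))
       + 3 * ((w - 1 / 2) * (√3 / 4 * (1 - c) + s * (5 / 4 - (c / 2 + √3 / 2 * s)))) := by
    linear_combination (√3 * w  + √3 / 2 - 3 * √3 / 8) * hc + (w * s / 4 + s / 8 - 3 / 8 * c * s) * h3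
  linarith

lemma not_le_of_pos_sq {u v : ℝ} (hv : 0 ≤ v) (h : v < u) : ¬ (u ^ 2 - v ^ 2 ≤ 0) := by
  nlinarith

/-- for `a ≥ 3` the hypotheses are contradictory. -/
lemma excl_ge3 (A B x : ℝ) (hx0 : 0 ≤ x) (hxA : x ≤ A) (hB0 : 0 < B) (hB : B ≤ π / 2)
    (hA : A ≤ π / 4 ∨ (A = π / 3 ∧ π / 12 ≤ x)) (hA0 : 0 < A)
    (h : 0 < ((cos A + cos (2 * A - 2 * A)) * sin B) ^ 2 - ((cos A + cos B) * sin A) ^ 2) :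
    ¬ ((cos x + cos (2 * A - 2 * x)) * sin B) ^ 2 - ((cos x + cos B) * sin x) ^ 2 ≤ 0 := by
  have hpi := pi_pos
  have hA3 : A ≤ π / 3 := by rcases hA with h | h <;> linarith [h]
  have hcB : 0 ≤ cos B := cos_nonneg_of_neg_pi_div_two_le_of_le (by linarith) hB
  have hsB : 0 < sin B := sin_pos_of_pos_of_lt_pi hB0 (by linarith)
  have hcx : 0 < cos x := cos_pos_of_mem_Ioo ⟨by linarith, by linarith⟩
  have hcA : 0 < cos A := cos_pos_of_mem_Ioo ⟨by linarith, by linarith⟩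
  have hsA : 0 < sin A := sin_pos_of_pos_of_lt_pi hA0 (by linarith)
  have hsx : 0 ≤ sin x := sin_nonneg_of_nonneg_of_le_pi hx0 (by linarith)
  have hc2 : 0 ≤ cos (2 * A - 2 * x) := by
    apply cos_nonneg_of_neg_pi_div_two_le_of_le
    · linarith
    · rcases hA with h | h <;> linarith [h]
  rw [sub_self, cos_zero] at h
  have h' : (cos A + cos B) * sin A < (cos A + 1) * sin B := by
    by_contra hc
    have : 0 ≤ (cos A + 1) * sin B := by positivity
    push Not at hc
    nlinarith
  apply not_le_of_pos_sq (by positivity)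
  have main : sin x * (cos x + cos B) * (1 + cos A)
      ≤ sin A * (cos A + cos B) * (cos x + cos (2 * A - 2 * x)) →
      (cos x + cos B) * sin x < (cos x + cos (2 * A - 2 * x)) * sin B := by
    intro hk
    have : (cos A + cos B) * sin A * (cos x + cos (2 * A - 2 * x))
      < (cos A + 1) * sin B * (cos x + cos (2 * A - 2 * x)) :=
      mul_lt_mul_of_pos_right h' (by linarith)
    have : (1 + cos A) * ((cos x + cos B) * sin x)
      < (1 + cos A) * ((cos x + cos (2 * A - 2 * x)) * sin B) := by linarith
    exact lt_of_mul_lt_mul_left this (by linarith)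
  rcases hA with h4 | ⟨h3, hx12⟩
  · exact main (key4 A x _ hx0 hxA h4 hcB (cos_le_one B))
  · subst h3
    by_cases hB3 : B ≤ π / 3
    · apply main
      have hw : 1 / 2 ≤ cos B := by
        rw [← cos_pi_div_three]
        exact cos_le_cos_of_nonneg_of_le_pi hB0.le (by linarith) hB3
      have := key3 x (cos B) hxA hx12 hw (cos_le_one B)
      rwa [sin_pi_div_three, cos_pi_div_three]
    · push Not at hB3
      have hw : cos B < 1 / 2 := by
        rw [← cos_pi_div_three]
        exact cos_lt_cos_of_nonneg_of_le_pi (by linarith) (by linarith) hB3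
      have hs : √3 / 2 < sin B := by
        rw [← sin_pi_div_three]
        exact sin_lt_sin_of_lt_of_le_pi_div_two (by linarith) hB hB3
      have := key3 x (1 / 2) hxA hx12 le_rfl (by norm_num)
      have k1 : (cos x + cos B) * sin x ≤ (cos x + 1 / 2) * sin x :=
        mul_le_mul_of_nonneg_right (by linarith) hsx
      have k2 : (cos x + cos (2 * (π / 3) - 2 * x)) * (√3 / 2)
        < (cos x + cos (2 * (π / 3) - 2 * x)) * sin B :=
        mul_lt_mul_of_pos_left hs (by linarith)
      have k3 : 0 ≤ (cos x + cos (2 * (π / 3) - 2 * x)) * √3 := by positivity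
      linarith

/-- for `a = 2` and `3 ≤ b ≤ 5` the hypotheses are contradictory. -/
lemma excl_two (B x : ℝ) (hx0 : π / 3 ≤ x) (hxA : x < π / 2) (hB0 : π / 3 < B)
    (hB : B ≤ 2 * π / 3) :
    ¬ ((cos x + cos (π - 2 * x)) * sin B) ^ 2 - ((cos x + cos B) * sin x) ^ 2 ≤ 0 := by
  have hpi := pi_pos
  have h3 : √3 * √3 = 3 := mul_self_sqrt (by norm_num)
  have h30 : 0 ≤ √3 := sqrt_nonneg 3
  have hc0 : 0 < cos x := cos_pos_of_mem_Ioo ⟨by linarith, by linarith⟩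
  have hc2 : cos x ≤ 1 / 2 := by
    rw [← cos_pi_div_three]
    exact cos_le_cos_of_nonneg_of_le_pi (by linarith) (by linarith) hx0
  have hcB : cos B < 1 / 2 := by
    rw [← cos_pi_div_three]
    exact cos_lt_cos_of_nonneg_of_le_pi (by linarith) (by linarith) hB0
  have hcB' : - (1 / 2) ≤ cos B := by
    rw [← cos_pi_div_three, ← cos_pi_sub]
    exact cos_le_cos_of_nonneg_of_le_pi (by linarith) (by linarith) (by linarith)
  rw [cos_pi_sub, cos_two_mul]
  have px := sin_sq_add_cos_sq x
  have pB := sin_sq_add_cos_sq B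
  have hsx : 0 < sin x := sin_pos_of_pos_of_lt_pi (by linarith) (by linarith)
  generalize sin x = s at *
  generalize cos x = c at *
  generalize sin B = S at *
  generalize cos B = C at *
  have hs2 : s ^ 2 = (1 - c) * (1 + c) := by linarith
  have hS : 3 / 4 ≤ S ^ 2 := by nlinarith
  have e : (c + -(2 * c ^ 2 - 1)) = (1 - c) * (1 + 2 * c) := by ring
  rw [e, mul_pow, mul_pow, mul_pow, hs2]
  have k1 : (c + C) ^ 2 < (c + 1 / 2) ^ 2 := by nlinarith
  have k2 : (c + C) ^ 2 * ((1 - c) * (1 + c)) < (c + 1 / 2) ^ 2 * ((1 - c) * (1 + c)) :=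
    mul_lt_mul_of_pos_right k1 (mul_pos (by linarith) (by linarith))
  have k3 : ((1 - c) ^ 2 * (1 + 2 * c) ^ 2) * (3 / 4) ≤ ((1 - c) ^ 2 * (1 + 2 * c) ^ 2) * S ^ 2 :=
    mul_le_mul_of_nonneg_left hS (by positivity)
  have k4 : 0 ≤ (1 + 2 * c) ^ 2 * ((1 - c) * (1 - 2 * c)) :=
    mul_nonneg (by positivity) (mul_nonneg (by linarith) (by linarith))
  nlinarith

lemma two_arg (x : ℝ) : 2 * π / ((2 : ℤ) : ℝ) - 2 * x = π - 2 * x := by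
  push_cast; ring

lemma B00_two (x y : ℝ) : B00 2 x y =
    -((cos y - cos x) * (cos y + 3 * cos x - 4 * cos x ^ 3)) := by
  simp only [B00, two_arg]
  rw [cos_pi_sub, cos_two_mul]; ring

lemma B11_fac (b : ℤ) (x y : ℝ) : B11 b x y =
    -((cos x + cos (2 * π / (b : ℝ) - y)) * (cos x + cos (2 * π / (b : ℝ) - 3 * y))) := by
  have e1 : 2 * π / (b : ℝ) - y = (2 * π / (b : ℝ) - 2 * y) + y := by ring
  have e2 : 2 * π / (b : ℝ) - 3 * y = (2 * π / (b : ℝ) - 2 * y) - y := by ring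
  rw [B11, e1, e2, cos_add, cos_sub (2 * π / (b : ℝ) - 2 * y) y]
  have p1 := sin_sq_add_cos_sq (2 * π / (b : ℝ) - 2 * y)
  have p2 := sin_sq_add_cos_sq y
  generalize 2 * π / (b : ℝ) - 2 * y = z at *
  linear_combination (-1 : ℝ) * (sin y ^ 2) * p1 + (cos z ^ 2 - 1) * p2

lemma H_anti (B : ℝ) (hB : B ≤ π / 3) :
    StrictAntiOn (fun y => sin (B - 2 * y) ^ 2 * cos y + 3 / 2 * sin (B - 2 * y) * sin y)
      (Set.Icc 0 (B / 3)) := by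
  have hpi := pi_pos
  apply strictAntiOn_of_deriv_neg (convex_Icc _ _)
  · fun_prop
  · intro y hy
    rw [interior_Icc] at hy
    obtain ⟨h0, h1⟩ := hy
    have hl : HasDerivAt (fun y : ℝ => B - 2 * y) (-2) y := by
      simpa using ((hasDerivAt_id y).const_mul 2).const_sub B
    have hd := ((hl.sin.pow 2).mul (hasDerivAt_cos y)).add
      ((hl.sin.const_mul (3 / 2)).mul (hasDerivAt_sin y))
    have hd' : deriv (fun y => sin (B - 2 * y) ^ 2 * cos y + 3 / 2 * sin (B - 2 * y) * sin y) y = _ :=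
      hd.deriv
    rw [hd']
    have hS : 0 < sin (B - 2 * y) := sin_pos_of_pos_of_lt_pi (by linarith) (by linarith)
    have hC : 1 / 2 ≤ cos (B - 2 * y) := by
      rw [← cos_pi_div_three]
      exact cos_le_cos_of_nonneg_of_le_pi (by linarith) (by linarith) (by linarith)
    have hs : 0 < sin y := sin_pos_of_pos_of_lt_pi (by linarith) (by linarith)
    have hc : 0 < cos y := cos_pos_of_mem_Ioo ⟨by linarith, by linarith⟩
    simp only [Nat.cast_ofNat]
    generalize sin (B - 2 * y) = S at *
    generalize cos (B - 2 * y) = C at *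
    have k1 : 0 < S * cos y := by positivity
    have k2 : S * cos y * (1 / 2) ≤ S * cos y * C := mul_le_mul_of_nonneg_left hC k1.le
    have k3 : 0 < S ^ 2 * sin y := by positivity
    have k4 : 0 < C * sin y := mul_pos (by linarith) hs
    norm_num
    nlinarith

lemma uniq_core (B y y' c c' : ℝ) (hB : B ≤ π / 3) (hy : 0 ≤ y) (hyy : y < y') (hy' : y' ≤ B / 3)
    (hc : 0 ≤ c) (hc' : c' ≤ 1 / 2)
    (e : sin y = 2 * c * sin (B - 2 * y)) (e' : sin y' = 2 * c' * sin (B - 2 * y'))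
    (E : (cos y - c) * (cos y + 3 * c - 4 * c ^ 3) * sin (B - 2 * y) ^ 2
      = (c + cos (B - y)) * (c + cos (B - 3 * y)) * (1 - c ^ 2))
    (E' : (cos y' - c') * (cos y' + 3 * c' - 4 * c' ^ 3) * sin (B - 2 * y') ^ 2
      = (c' + cos (B - y')) * (c' + cos (B - 3 * y')) * (1 - c' ^ 2)) : False := by
  have hpi := pi_pos
  have hS' : 0 < sin (B - 2 * y') := sin_pos_of_pos_of_lt_pi (by linarith) (by linarith)
  have hSS : sin (B - 2 * y') < sin (B - 2 * y) :=
    sin_lt_sin_of_lt_of_le_pi_div_two (by linarith) (by linarith) (by linarith)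
  have hss : sin y < sin y' :=
    sin_lt_sin_of_lt_of_le_pi_div_two (by linarith) (by linarith) (by linarith)
  have hs0 : 0 ≤ sin y := sin_nonneg_of_nonneg_of_le_pi hy (by linarith)
  have hcos : cos y' < cos y := cos_lt_cos_of_nonneg_of_le_pi hy (by linarith) hyy
  have hcos' : 1 / 2 < cos y' := by
    rw [← cos_pi_div_three]
    exact cos_lt_cos_of_nonneg_of_le_pi (by linarith) (by linarith) (by linarith)
  have hcc : c < c' := by
    by_contra hcon
    push Not at hcon
    have h1 : c' * sin (B - 2 * y') ≤ c * sin (B - 2 * y') :=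
      mul_le_mul_of_nonneg_right hcon hS'.le
    have h2 : c * sin (B - 2 * y') ≤ c * sin (B - 2 * y) :=
      mul_le_mul_of_nonneg_left hSS.le hc
    linarith
  have r1 : cos (B - y) ≤ cos (B - y') :=
    cos_le_cos_of_nonneg_of_le_pi (by linarith) (by linarith) (by linarith)
  have r2 : cos (B - 3 * y) ≤ cos (B - 3 * y') :=
    cos_le_cos_of_nonneg_of_le_pi (by linarith) (by linarith) (by linarith)
  have r3 : 0 < cos (B - y) := cos_pos_of_mem_Ioo ⟨by linarith, by linarith⟩
  have r4 : 0 < cos (B - 3 * y) := cos_pos_of_mem_Ioo ⟨by linarith, by linarith⟩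
  have R : (c + cos (B - y)) * (c + cos (B - 3 * y))
      ≤ (c' + cos (B - y')) * (c' + cos (B - 3 * y')) :=
    mul_le_mul (by linarith) (by linarith) (by linarith) (by linarith)
  have hH := H_anti B hB ⟨hy, by linarith⟩ ⟨by linarith, hy'⟩ hyy
  simp only at hH
  have c1 := cos_le_one y
  generalize sin (B - 2 * y) = S at *
  generalize sin (B - 2 * y') = S' at *
  generalize (c + cos (B - y)) * (c + cos (B - 3 * y)) = r at *
  generalize (c' + cos (B - y')) * (c' + cos (B - 3 * y')) = r' at *
  generalize cos y = C at *
  generalize cos y' = C' at *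
  generalize sin y = s at *
  generalize sin y' = s' at *
  have g1 : (C + 3 * c - 4 * c ^ 3) * S ^ 2 = (S ^ 2 * C + 3 / 2 * S * s) - c * s ^ 2 := by
    rw [e]; ring
  have g2 : (C' + 3 * c' - 4 * c' ^ 3) * S' ^ 2 = (S' ^ 2 * C' + 3 / 2 * S' * s') - c' * s' ^ 2 := by
    rw [e']; ring
  have g3 : c * s ^ 2 ≤ c' * s' ^ 2 :=
    mul_le_mul hcc.le (pow_le_pow_left₀ hs0 hss.le 2) (sq_nonneg s) (by linarith)
  have hG : (C' + 3 * c' - 4 * c' ^ 3) * S' ^ 2 < (C + 3 * c - 4 * c ^ 3) * S ^ 2 := by linarith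
  have hG0 : 0 < (C' + 3 * c' - 4 * c' ^ 3) * S' ^ 2 := by
    apply mul_pos _ (by positivity)
    have k0 : c' ^ 2 ≤ (1 / 2) ^ 2 := pow_le_pow_left₀ (by linarith) hc' 2
    have k1 : 0 ≤ c' * (3 - 4 * c' ^ 2) := mul_nonneg (by linarith) (by linarith)
    have k2 : C' + 3 * c' - 4 * c' ^ 3 = C' + c' * (3 - 4 * c' ^ 2) := by ring
    linarith
  have d : 0 < 1 - c ^ 2 := sub_pos.2 (pow_lt_one₀ hc (by linarith) (by norm_num))
  have d' : 0 < 1 - c' ^ 2 := sub_pos.2 (pow_lt_one₀ (by linarith) (by linarith) (by norm_num))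
  have q : (C' - c') * (1 - c ^ 2) ≤ (C - c) * (1 - c' ^ 2) := by
    have q1 : (C' - c') * (1 - c ^ 2) ≤ (C - c') * (1 - c ^ 2) :=
      mul_le_mul_of_nonneg_right (by linarith) d.le
    have q2 : (C - c) * (1 - c' ^ 2) - (C - c') * (1 - c ^ 2)
      = (c' - c) * (1 + c * c' - C * (c + c')) := by ring
    have q3 : 0 ≤ 1 + c * c' - C * (c + c') := by
      have : C * (c + c') ≤ 1 * (c + c') := mul_le_mul_of_nonneg_right c1 (by linarith)
      have : 0 ≤ (1 - c) * (1 - c') := mul_nonneg (by linarith) (by linarith)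
      linarith
    have := mul_nonneg (sub_nonneg.2 hcc.le) q3
    linarith
  rw [mul_assoc] at E E'
  generalize (C' + 3 * c' - 4 * c' ^ 3) * S' ^ 2 = G' at *
  generalize (C + 3 * c - 4 * c ^ 3) * S ^ 2 = G at *
  have m1 : (C' - c') * (1 - c ^ 2) * G' ≤ (C - c) * (1 - c' ^ 2) * G' :=
    mul_le_mul_of_nonneg_right q hG0.le
  have m2 : (C - c) * (1 - c' ^ 2) * G' < (C - c) * (1 - c' ^ 2) * G :=
    mul_lt_mul_of_pos_left hG (mul_pos (by linarith) d')
  have m3 : r * ((1 - c ^ 2) * (1 - c' ^ 2)) ≤ r' * ((1 - c ^ 2) * (1 - c' ^ 2)) :=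
    mul_le_mul_of_nonneg_right R (mul_pos d d').le
  have m4 : (C - c) * (1 - c' ^ 2) * G = r * ((1 - c ^ 2) * (1 - c' ^ 2)) := by
    linear_combination (1 - c' ^ 2) * E
  have m5 : (C' - c') * (1 - c ^ 2) * G' = r' * ((1 - c ^ 2) * (1 - c' ^ 2)) := by
    linear_combination (1 - c ^ 2) * E'
  linarith

lemma f2_two (b : ℤ) (x y : ℝ) : f2 2 b x y =
    (cos y - cos x) * (cos y + 3 * cos x - 4 * cos x ^ 3) * sin (2 * π / (b : ℝ) - 2 * y) ^ 2
    - (cos x + cos (2 * π / (b : ℝ) - y)) * (cos x + cos (2 * π / (b : ℝ) - 3 * y))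
      * (1 - cos x ^ 2) := by
  rw [f2, B00_two, B11_fac, sin_sq x]; ring

/-- A solution in the domain satisfies the reduced system. -/
lemma reduce (b : ℤ) (x y : ℝ) (hB0 : 0 < 2 * π / (b : ℝ)) (hB : 2 * π / (b : ℝ) ≤ π / 3)
    (hx1 : π / 3 ≤ x) (hx2 : x ≤ π / 2) (hy0 : 0 ≤ y) (hy1 : y ≤ π / (b : ℝ))
    (h1 : f1 2 b x y = 0) (h2 : f2 2 b x y = 0) :
    0 ≤ cos x ∧ cos x ≤ 1 / 2 ∧ y ≤ 2 * π / (b : ℝ) / 3 ∧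
      0 < sin (2 * π / (b : ℝ) - 2 * y) ∧
      sin y = 2 * cos x * sin (2 * π / (b : ℝ) - 2 * y) := by
  have hpi := pi_pos
  have hyB : y ≤ 2 * π / (b : ℝ) / 2 := by
    have : 2 * π / (b : ℝ) / 2 = π / b := by ring
    linarith
  have p00 := B00_two x y
  have p11 := B11_fac b x y
  unfold f1 at h1
  unfold f2 at h2
  rw [two_arg, sin_pi_sub, sin_two_mul] at h1
  generalize 2 * π / (b : ℝ) = B at *
  have hc0 : 0 ≤ cos x := cos_nonneg_of_neg_pi_div_two_le_of_le (by linarith) (by linarith)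
  have hc2 : cos x ≤ 1 / 2 := by
    rw [← cos_pi_div_three]
    exact cos_le_cos_of_nonneg_of_le_pi (by linarith) (by linarith) hx1
  have hcy : 1 / 2 < cos y := by
    rw [← cos_pi_div_three]
    exact cos_lt_cos_of_nonneg_of_le_pi (by linarith) (by linarith) (by linarith)
  have hsx : 0 < sin x := sin_pos_of_pos_of_lt_pi (by linarith) (by linarith)
  have hsy : 0 ≤ sin y := sin_nonneg_of_nonneg_of_le_pi (by linarith) (by linarith)
  have hS : 0 ≤ sin (B - 2 * y) := sin_nonneg_of_nonneg_of_le_pi (by linarith) (by linarith)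
  have r3 : 0 < cos (B - y) := cos_pos_of_mem_Ioo ⟨by linarith, by linarith⟩
  have r4 : 0 < cos (B - 3 * y) := cos_pos_of_mem_Ioo ⟨by linarith, by linarith⟩
  have n00 : B00 2 x y < 0 := by
    rw [p00]
    have k0 : cos x ^ 2 ≤ (1 / 2) ^ 2 := pow_le_pow_left₀ hc0 hc2 2
    have k1 : 0 ≤ cos x * (3 - 4 * cos x ^ 2) := mul_nonneg (by linarith) (by linarith)
    have k2 : 0 < cos y + 3 * cos x - 4 * cos x ^ 3 := by linarith
    have := mul_pos (show 0 < cos y - cos x by linarith) k2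
    linarith
  have n11 : B11 b x y < 0 := by
    rw [p11]
    have := mul_pos (show 0 < cos x + cos (B - y) by linarith)
      (show 0 < cos x + cos (B - 3 * y) by linarith)
    linarith
  have key : sin y = 2 * cos x * sin (B - 2 * y) := by
    have hne : B00 2 x y * B11 b x y * sin x ^ 2 ≠ 0 := by
      have := mul_pos_of_neg_of_neg n00 n11
      positivity
    have : B00 2 x y * B11 b x y * sin x ^ 2 * (sin y ^ 2)
        = B00 2 x y * B11 b x y * sin x ^ 2 * ((2 * cos x * sin (B - 2 * y)) ^ 2) := by
      linear_combination (B11 b x y * sin x ^ 2) * h1 + (B11 b x y * (2 * sin x * cos x) ^ 2) * h2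
    have := mul_left_cancel₀ hne this
    exact (pow_left_inj₀ hsy (by positivity) (by norm_num)).1 this
  have hSpos : 0 < sin (B - 2 * y) := by
    rcases hS.lt_or_eq with h | h
    · exact h
    · rw [← h, mul_zero] at key
      have y0 : y = 0 := by
        by_contra hne
        have := sin_pos_of_pos_of_lt_pi (lt_of_le_of_ne hy0 (Ne.symm hne)) (by linarith)
        linarith
      rw [y0] at h
      have := sin_pos_of_pos_of_lt_pi (x := B - 2 * 0) (by linarith) (by linarith)
      linarith
  refine ⟨hc0, hc2, ?_, hSpos, key⟩
  by_contra hcon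
  push Not at hcon
  have : sin (B - 2 * y) < sin y :=
    sin_lt_sin_of_lt_of_le_pi_div_two (by linarith) (by linarith) (by linarith)
  have : 2 * cos x * sin (B - 2 * y) ≤ 1 * sin (B - 2 * y) :=
    mul_le_mul_of_nonneg_right (by linarith) hS
  linarith

lemma f2_contOn (b : ℤ) (g : ℝ → ℝ) (s : Set ℝ) (hg : ContinuousOn g s) :
    ContinuousOn (fun y => f2 2 b (g y) y) s := by
  simp only [f2_two]
  fun_prop

lemma exist_core (b : ℤ) (hB0 : 0 < 2 * π / (b : ℝ)) (hB : 2 * π / (b : ℝ) ≤ π / 3)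
    (h : 0 < f2 2 b (π / 2) 0) :
    ∃ x y : ℝ, π / 3 ≤ x ∧ x ≤ π / 2 ∧ 0 ≤ y ∧ y ≤ 2 * π / (b : ℝ) / 3 ∧
      f1 2 b x y = 0 ∧ f2 2 b x y = 0 := by
  have hpi := pi_pos
  set B := 2 * π / (b : ℝ) with hBdef
  have hSpos : ∀ y ∈ Set.Icc 0 (B / 3), 0 < sin (B - 2 * y) := fun y hy =>
    sin_pos_of_pos_of_lt_pi (by linarith [hy.2]) (by linarith [hy.1])
  let g : ℝ → ℝ := fun y => arccos (sin y / (2 * sin (B - 2 * y)))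
  have hg : ContinuousOn g (Set.Icc 0 (B / 3)) := by
    apply continuous_arccos.comp_continuousOn
    apply ContinuousOn.div (by fun_prop) (by fun_prop)
    intro y hy
    have := hSpos y hy
    positivity
  have hF : ContinuousOn (fun y => f2 2 b (g y) y) (Set.Icc 0 (B / 3)) := by
    exact f2_contOn b g _ hg
  have g0 : g 0 = π / 2 := by simp [g]
  have g1 : g (B / 3) = π / 3 := by
    have h1 : B - 2 * (B / 3) = B / 3 := by ring
    have := hSpos (B / 3) ⟨by linarith, le_rfl⟩
    rw [h1] at this
    simp only [g, h1]
    rw [show sin (B / 3) / (2 * sin (B / 3)) = cos (π / 3) by rw [cos_pi_div_three]; field_simp]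
    exact arccos_cos (by linarith) (by linarith)
  have e1 : f2 2 b (g (B / 3)) (B / 3) ≤ 0 := by
    rw [g1, f2_two, ← hBdef, cos_pi_div_three, show B - 2 * (B / 3) = B / 3 by ring,
      show B - B / 3 = 2 * (B / 3) by ring, show B - 3 * (B / 3) = 0 by ring, cos_zero, cos_two_mul,
      sin_sq]
    have hC : √3 / 2 ≤ cos (B / 3) := by
      rw [← cos_pi_div_six]
      exact cos_le_cos_of_nonneg_of_le_pi (by linarith) (by linarith) (by linarith)
    have hC1 := cos_le_one (B / 3)
    have h3 : √3 * √3 = 3 := mul_self_sqrt (by norm_num)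
    have h30 : 0 ≤ √3 := sqrt_nonneg 3
    generalize cos (B / 3) = C at *
    have q : 3 / 4 ≤ C ^ 2 := by nlinarith
    have q0 : 0 ≤ C := by linarith
    have q1 : (C - 1 / 2) * (C + 1) ≤ 1 := by nlinarith
    have q2 : (C - 1 / 2) * (C + 1) * (1 - C ^ 2) ≤ 1 * (1 - C ^ 2) :=
      mul_le_mul_of_nonneg_right q1 (by nlinarith)
    nlinarith
  have iv := intermediate_value_Icc' (show (0 : ℝ) ≤ B / 3 by linarith) hF
  obtain ⟨y, hy, hy2⟩ := iv ⟨e1, by simpa only [g0] using h.le⟩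
  have hS := hSpos y hy
  have hsy : 0 ≤ sin y := sin_nonneg_of_nonneg_of_le_pi hy.1 (by linarith [hy.2])
  have hle : sin y ≤ sin (B - 2 * y) :=
    sin_le_sin_of_le_of_le_pi_div_two (by linarith [hy.1]) (by linarith [hy.1]) (by linarith [hy.2])
  have c0 : 0 ≤ sin y / (2 * sin (B - 2 * y)) := by positivity
  have c2 : sin y / (2 * sin (B - 2 * y)) ≤ 1 / 2 := by
    rw [div_le_div_iff₀ (by positivity) (by norm_num)]; linarith
  have hcg : cos (g y) = sin y / (2 * sin (B - 2 * y)) := cos_arccos (by linarith) (by linarith)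
  have hg2 : g y ≤ π / 2 := arccos_le_pi_div_two.2 c0
  have hg3 : π / 3 ≤ g y := by
    rw [← arccos_cos (x := π / 3) (by linarith) (by linarith), cos_pi_div_three]
    exact arccos_le_arccos c2
  have hsg : 0 < sin (g y) := sin_pos_of_pos_of_lt_pi (by linarith) (by linarith)
  refine ⟨g y, y, hg3, hg2, hy.1, hy.2, ?_, hy2⟩
  have key : sin y = 2 * cos (g y) * sin (B - 2 * y) := by
    rw [hcg]; field_simp
  simp only at hy2
  unfold f2 at hy2
  unfold f1
  rw [two_arg, sin_pi_sub, sin_two_mul]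
  rw [← hBdef] at hy2
  have : sin (g y) ^ 2 * (B00 2 (g y) y * sin y ^ 2 - B11 b (g y) y * (2 * sin (g y) * cos (g y)) ^ 2) = 0 := by
    rw [key]
    linear_combination (- (2 * sin (g y) * cos (g y)) ^ 2) * hy2
  rcases mul_eq_zero.1 this with h | h
  · exact absurd h (by positivity)
  · exact h

lemma case_two (b : ℤ) (hb : 6 ≤ b) (h : 0 < f2 2 b (π / 2) 0) :
    ∃! p : ℝ × ℝ, p ∈ Dom 2 b ∧ f1 2 b p.1 p.2 = 0 ∧ f2 2 b p.1 p.2 = 0 := by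
  have hpi := pi_pos
  have hb' : (6 : ℝ) ≤ b := by exact_mod_cast hb
  have hB0 : 0 < 2 * π / (b : ℝ) := by positivity
  have hB : 2 * π / (b : ℝ) ≤ π / 3 := by
    rw [div_le_div_iff₀ (by linarith) (by norm_num)]; nlinarith
  have hhalf : 2 * π / (b : ℝ) / 2 = π / b := by ring
  have hmem : ∀ x y : ℝ, (x, y) ∈ Dom 2 b ↔
      (π / 3 ≤ x ∧ x ≤ π / 2) ∧ (0 ≤ y ∧ y ≤ π / (b : ℝ)) := by
    intro x y
    simp [Dom, alphaI]
    tauto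
  obtain ⟨x, y, hx1, hx2, hy1, hy2, hf1, hf2⟩ := exist_core b hB0 hB h
  have hy2' : y ≤ π / b := by linarith
  refine ⟨(x, y), ⟨(hmem x y).2 ⟨⟨hx1, hx2⟩, hy1, hy2'⟩, hf1, hf2⟩, ?_⟩
  rintro ⟨x', y'⟩ ⟨hm, hf1', hf2'⟩
  obtain ⟨⟨hx1', hx2'⟩, hy1', hy2''⟩ := (hmem x' y').1 hm
  obtain ⟨a1, a2, a3, a4, a5⟩ := reduce b x y hB0 hB hx1 hx2 hy1 hy2' hf1 hf2
  obtain ⟨b1, b2, b3, b4, b5⟩ := reduce b x' y' hB0 hB hx1' hx2' hy1' hy2'' hf1' hf2'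
  simp only at hf2'
  rw [f2_two] at hf2 hf2'
  have E := sub_eq_zero.1 hf2
  have E' := sub_eq_zero.1 hf2'
  have hyy : y' = y := by
    rcases lt_trichotomy y y' with hlt | heq | hlt
    · exact (uniq_core _ y y' _ _ hB hy1 hlt b3 a1 b2 a5 b5 E E').elim
    · exact heq.symm
    · exact (uniq_core _ y' y _ _ hB hy1' hlt a3 b1 a2 b5 a5 E' E).elim
  subst hyy
  have hcc : cos x' = cos x := by
    have : cos x' * (2 * sin (2 * π / (b : ℝ) - 2 * y')) = cos x * (2 * sin (2 * π / (b : ℝ) - 2 * y')) := by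
      linarith
    exact mul_right_cancel₀ (by positivity) this
  have hxx : x' = x := injOn_cos ⟨by linarith, by linarith⟩ ⟨by linarith, by linarith⟩ hcc
  rw [hxx]

theorem stmt11 (a b : ℤ) (ha : 2 ≤ a) (hab : a < b)
    (h : f2 a b (π / (a : ℝ)) 0 > 0)
    (hex : ∃ α₁ ∈ alphaI a, α₁ < π / (a : ℝ) ∧ f2 a b α₁ 0 ≤ 0) :
    ∃! p : ℝ × ℝ, p ∈ Dom a b ∧ f1 a b p.1 p.2 = 0 ∧ f2 a b p.1 p.2 = 0 := by
  have hpi := pi_pos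
  obtain ⟨x, hx, hxa, hle⟩ := hex
  by_cases ha2 : a = 2
  · subst ha2
    have hh : π / ((2 : ℤ) : ℝ) = π / 2 := by norm_num
    rw [hh] at h hxa
    by_cases hb : 6 ≤ b
    · exact case_two b hb h
    · exfalso
      have hb3 : (3 : ℝ) ≤ b := by exact_mod_cast hab
      have hb5 : (b : ℝ) ≤ 5 := by exact_mod_cast (by omega : b ≤ 5)
      simp only [alphaI, if_true, Set.mem_Icc] at hx
      rw [f2_zero, hh, show 2 * (π / 2) = π by ring] at hle
      refine excl_two (2 * (π / b)) x hx.1 hxa ?_ ?_ hle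
      · rw [← mul_div_assoc, div_lt_div_iff₀ (by norm_num) (by linarith)]; nlinarith
      · rw [← mul_div_assoc, div_le_div_iff₀ (by linarith) (by norm_num)]; nlinarith
  · exfalso
    have ha3 : (3 : ℝ) ≤ a := by exact_mod_cast (by omega : 3 ≤ a)
    have hb4 : (4 : ℝ) ≤ b := by exact_mod_cast (by omega : 4 ≤ b)
    rw [f2_zero] at hle h
    have hcase : 0 ≤ x ∧ (π / (a : ℝ) ≤ π / 4 ∨ (π / (a : ℝ) = π / 3 ∧ π / 12 ≤ x)) := by
      by_cases h3 : a = 3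
      · subst h3
        simp only [alphaI, Set.mem_Icc] at hx
        norm_num at hx
        refine ⟨by linarith [hx.1], Or.inr ⟨by norm_num, hx.1⟩⟩
      · simp only [alphaI, ha2, h3, if_false, Set.mem_Icc] at hx
        have ha4 : (4 : ℝ) ≤ a := by exact_mod_cast (by omega : 4 ≤ a)
        exact ⟨hx.1, Or.inl (div_le_div_of_nonneg_left hpi.le (by norm_num) ha4)⟩
    refine excl_ge3 (π / a) (2 * (π / b)) x hcase.1 hxa.le (by positivity) ?_ hcase.2
      (by positivity) h hle
    rw [← mul_div_assoc, div_le_div_iff₀ (by linarith) (by norm_num)]; nlinarith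
end

section
/- For every integer a ≥ 6, the criterion fails at b = 2a + 1; that is, (1 + cos(π/a))·sin(2π/(2a+1)) < (cos(π/a) + cos(2π/(2a+1)))·sin(π/a). Consequently, for a ≥ 6 the largest integer b for which the criterion holds is b_max = 2a. -/
open Real

lemma key_id (h y : ℝ) : (1 + cos (2*h)) * sin y - (cos (2*h) + cos y) * sin (2*h)
    = 2 * cos h * (sin (y - h) - sin h * cos (2*h)) := by
  rw [sin_sub, sin_two_mul]
  have : cos (2*h) = 2 * cos h ^ 2 - 1 := cos_two_mul h
  rw [this]; ring

lemma key_ineq (h : ℝ) (h0 : 0 < h) (h1 : h ≤ π / 12) :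
    sin (2 * π * h / (π + h) - h) < sin h * cos (2*h) := by
  have hp := pi_gt_three
  have hp2 := pi_lt_d2
  have hh : h ≤ 0.2625 := by linarith
  obtain ⟨d, hd⟩ : ∃ d, d = 2 * h^2 / (π + h) := ⟨_, rfl⟩
  have e : 2 * π * h / (π + h) - h = h - d := by
    rw [hd]; field_simp; ring
  have hd0 : 0 < d := by rw [hd]; positivity
  have hdl : 0.586 * h^2 ≤ d := by
    rw [hd, le_div_iff₀ (by linarith)]
    nlinarith [sq_nonneg h, mul_nonneg (sq_nonneg h) (by linarith : (0:ℝ) ≤ 3.4125 - (π + h))]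
  have hdu : d ≤ 0.05 := by
    rw [hd, div_le_iff₀ (by linarith)]
    nlinarith
  have hsd : d - d^3/6 < sin d := sin_gt_sub_cube hd0
  have hsd2 : 0.585 * h^2 ≤ sin d := by nlinarith [mul_pos hd0 hd0]
  have hsh : sin h ≤ h := (sin_lt h0).le
  have hsh0 : 0 < sin h := sin_pos_of_pos_of_lt_pi h0 (by linarith)
  have hc : 0.965 ≤ cos h := by nlinarith [one_sub_sq_div_two_le_cos (x := h)]
  have hs3 : sin h ^ 3 ≤ h ^ 3 := by gcongr
  have hm : 0.965 * (0.585 * h^2) ≤ cos h * sin d := by gcongr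
  have hc2 : cos (2*h) = 1 - 2 * sin h ^ 2 := by rw [cos_two_mul, cos_sq']; ring
  rw [e, sin_sub, hc2]
  nlinarith [cos_le_one d, mul_pos h0 h0, mul_nonneg hsh0.le (sub_nonneg.2 (cos_le_one d)),
    mul_nonneg (sq_nonneg h) (sub_nonneg.2 hh)]

lemma fail_all (a b : ℤ) (ha : 6 ≤ a) (hb : 2 * a + 1 ≤ b) :
    (1 + cos (π / (a : ℝ))) * sin (2 * π / (b : ℝ)) <
      (cos (π / (a : ℝ)) + cos (2 * π / (b : ℝ))) * sin (π / (a : ℝ)) := by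
  have hA : (6:ℝ) ≤ a := by exact_mod_cast ha
  have hB : 2 * (a:ℝ) + 1 ≤ b := by exact_mod_cast hb
  have hp := pi_pos
  obtain ⟨h, hh⟩ : ∃ h, h = π / (2 * (a:ℝ)) := ⟨_, rfl⟩
  have h0 : 0 < h := by rw [hh]; positivity
  have h1 : h ≤ π / 12 := by rw [hh]; gcongr; linarith
  have e : π / (a:ℝ) = 2 * h := by rw [hh]; field_simp
  have e2 : 2 * π * h / (π + h) = 2 * π / (2 * a + 1) := by
    rw [hh]; field_simp
  have hy : 2 * π / (b:ℝ) ≤ 2 * π / (2 * a + 1) := by gcongr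
  have hy0 : 0 < 2 * π / (b:ℝ) := div_pos (by positivity) (by linarith)
  have hy1 : 2 * π / (2 * (a:ℝ) + 1) ≤ 2 * π / 12 := by gcongr; linarith
  have k := key_ineq h h0 h1
  rw [e2] at k
  have m : sin (2 * π / (b:ℝ) - h) ≤ sin (2 * π / (2 * a + 1) - h) :=
    sin_le_sin_of_le_of_le_pi_div_two (by linarith) (by linarith) (by linarith)
  have hc : 0 < cos h := cos_pos_of_mem_Ioo ⟨by linarith, by linarith⟩
  have id := key_id h (2 * π / (b:ℝ))
  rw [e]
  have : 2 * cos h * (sin (2 * π / (b:ℝ) - h) - sin h * cos (2*h)) < 0 :=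
    mul_neg_of_pos_of_neg (by linarith) (by linarith)
  linarith

/-- For `a ≥ 6` the criterion fails at `b = 2a + 1`; consequently the largest integer `b > a`
for which the criterion holds is `b_max = 2a`. -/
theorem stmt16 (a : ℤ) (ha : 6 ≤ a) :
    (1 + cos (π / (a : ℝ))) * sin (2 * π / ((2 * a + 1 : ℤ) : ℝ)) <
      (cos (π / (a : ℝ)) + cos (2 * π / ((2 * a + 1 : ℤ) : ℝ))) * sin (π / (a : ℝ)) ∧
    IsGreatest {b : ℤ | a < b ∧
      (1 + cos (π / (a : ℝ))) * sin (2 * π / (b : ℝ)) >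
        (cos (π / (a : ℝ)) + cos (2 * π / (b : ℝ))) * sin (π / (a : ℝ))} (2 * a) := by
  refine ⟨fail_all a _ ha le_rfl, ⟨by lia, ?_⟩, ?_⟩
  · have hA : (6:ℝ) ≤ a := by exact_mod_cast ha
    have hp := pi_pos
    have e : 2 * π / ((2 * a : ℤ) : ℝ) = π / a := by push_cast; field_simp
    rw [e]
    have x0 : 0 < π / (a:ℝ) := by positivity
    have x1 : π / (a:ℝ) ≤ π / 6 := by gcongr
    have hs : 0 < sin (π / (a:ℝ)) := sin_pos_of_pos_of_lt_pi x0 (by linarith)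
    have hc : cos (π / (a:ℝ)) < 1 := by
      rw [← cos_zero]
      exact cos_lt_cos_of_nonneg_of_le_pi le_rfl (by linarith) x0
    exact mul_lt_mul_of_pos_right (by linarith) hs
  · rintro b ⟨_, hb⟩
    by_contra hlt
    exact absurd hb (not_lt.2 (fail_all a b ha (by lia)).le)
end

section
/- Let a = 2 and let b ≥ 4 be an integer. Then for every β₁ ∈ [0, π/b], one has f₁(π/3, β₁) > 0. Moreover, for every β₁ ∈ [0, π/b] one has f₁(0, β₁) = −(1 − cos β₁)²·sin²β₁ ≤ 0 and f₁(π/2, β₁) = −cos²β₁·sin²β₁ ≤ 0. -/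
open Real

theorem stmt17 (b : ℤ) (hb : 4 ≤ b) :
    ∀ β₁ ∈ Set.Icc 0 (π / (b : ℝ)),
      f1 2 b (π / 3) β₁ > 0 ∧
      f1 2 b 0 β₁ = -(1 - cos β₁) ^ 2 * sin β₁ ^ 2 ∧ f1 2 b 0 β₁ ≤ 0 ∧
      f1 2 b (π / 2) β₁ = -cos β₁ ^ 2 * sin β₁ ^ 2 ∧ f1 2 b (π / 2) β₁ ≤ 0 := by
  intro x hx
  obtain ⟨hx0, hxb⟩ := hx
  have hpi := Real.pi_pos
  have hb4 : (4 : ℝ) ≤ (b : ℝ) := by exact_mod_cast hb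
  have hb' : π / (b : ℝ) ≤ π / 4 := by gcongr
  have e2 : 2 * π / ((2 : ℤ) : ℝ) = π := by push_cast; ring
  have h0 : f1 2 b 0 x = -(1 - cos x) ^ 2 * sin x ^ 2 := by
    unfold f1 B00
    rw [e2]
    simp
    ring_nf
  have h1 : f1 2 b (π / 2) x = -cos x ^ 2 * sin x ^ 2 := by
    unfold f1 B00
    rw [e2, show π - 2 * (π / 2) = 0 by ring]
    simp
  refine ⟨?_, h0, ?_, h1, ?_⟩
  · have hs3 : sin (π / 3) ^ 2 = 3 / 4 := by
      rw [Real.sin_sq, Real.cos_pi_div_three]; norm_num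
    have hc0 : 0 ≤ cos x := Real.cos_nonneg_of_mem_Icc ⟨by linarith, by linarith⟩
    have hs0 : 0 ≤ sin x := Real.sin_nonneg_of_nonneg_of_le_pi hx0 (by linarith)
    have hc1 := Real.cos_le_one x
    have hsc := Real.sin_sq_add_cos_sq x
    have hc2 : 0 ≤ cos (2 * x) := Real.cos_nonneg_of_mem_Icc ⟨by linarith, by linarith⟩
    rw [Real.cos_two_mul] at hc2
    have hd : 2 * sin x * cos x ≤ cos (2 * π / (b : ℝ) - 2 * x) := by
      rw [← Real.sin_two_mul, ← Real.cos_pi_div_two_sub]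
      have e : 2 * π / (b : ℝ) = 2 * (π / b) := by ring
      rw [e]
      apply Real.cos_le_cos_of_nonneg_of_le_pi <;> linarith
    unfold f1 B00 B11
    rw [e2, show π - 2 * (π / 3) = π / 3 by ring, hs3, Real.cos_pi_div_three]
    generalize cos (2 * π / (b : ℝ) - 2 * x) = d at *
    generalize cos x = c at *
    generalize sin x = s at *
    have hp : 0 ≤ 2 * s * c := by positivity
    have hd2 : (2 * s * c) ^ 2 ≤ d ^ 2 := pow_le_pow_left₀ hp hd 2
    have hcd : 0 ≤ c * d := mul_nonneg hc0 (hp.trans hd)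
    have hs2 : s ^ 2 = 1 - c ^ 2 := by linarith
    have hm : 0 ≤ (1 - c) * s ^ 2 := mul_nonneg (by linarith) (sq_nonneg s)
    have hc3 : c ^ 2 ≤ 1 := by nlinarith [sq_nonneg s]
    have hd3 : 4 * (1 - c ^ 2) * c ^ 2 ≤ d ^ 2 := by rw [← hs2]; linarith
    rw [hs2] at hm ⊢
    nlinarith [mul_nonneg (sub_nonneg.2 hc3) hc2]
  · rw [h0]; nlinarith [sq_nonneg ((1 - cos x) * sin x)]
  · rw [h1]; nlinarith [sq_nonneg (cos x * sin x)]
end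

section
/- Let a, b be integers with b > a ≥ 3. Then for every β₁ ∈ [0, π/b], one has f₁(0, β₁) = −(cos(2π/a) + cos β₁)²·sin²β₁ + (cos β₁ + cos β₂)²·sin²(2π/a) > 0, where β₂ = 2π/b − 2β₁. Moreover, f₁(π/a, β₁) = −(cos(π/a) + cos β₁)²·sin²β₁ ≤ 0 for every β₁ ∈ [0, π/b], and f₁(α₁, 0) = (cos α₁ + cos(2π/b))²·sin²α₂ ≥ 0 for every α₁ ∈ [0, π/a]. -/
open Real

theorem stmt18 (a b : ℤ) (ha : 3 ≤ a) (hab : a < b) :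
    (∀ β₁ ∈ Set.Icc 0 (π / (b : ℝ)),
      f1 a b 0 β₁ = -(cos (2 * π / (a : ℝ)) + cos β₁) ^ 2 * sin β₁ ^ 2 +
          (cos β₁ + cos (2 * π / (b : ℝ) - 2 * β₁)) ^ 2 * sin (2 * π / (a : ℝ)) ^ 2 ∧
      f1 a b 0 β₁ > 0) ∧
    (∀ β₁ ∈ Set.Icc 0 (π / (b : ℝ)),
      f1 a b (π / (a : ℝ)) β₁ = -(cos (π / (a : ℝ)) + cos β₁) ^ 2 * sin β₁ ^ 2 ∧
      f1 a b (π / (a : ℝ)) β₁ ≤ 0) ∧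
    (∀ α₁ ∈ Set.Icc 0 (π / (a : ℝ)),
      f1 a b α₁ 0 = (cos α₁ + cos (2 * π / (b : ℝ))) ^ 2 *
          sin (2 * π / (a : ℝ) - 2 * α₁) ^ 2 ∧
      f1 a b α₁ 0 ≥ 0) := by
  have hpi := pi_pos
  have ha' : (3:ℝ) ≤ a := by exact_mod_cast ha
  have hab' : (a:ℝ) < b := by exact_mod_cast hab
  have hb' : (4:ℝ) ≤ b := by exact_mod_cast (by omega : (4:ℤ) ≤ b)
  have hA3 : π / (a:ℝ) ≤ π / 3 := div_le_div_of_nonneg_left hpi.le (by norm_num) ha'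
  have hB4 : π / (b:ℝ) ≤ π / 4 := div_le_div_of_nonneg_left hpi.le (by norm_num) hb'
  have hBA : π / (b:ℝ) < π / (a:ℝ) := div_lt_div_of_pos_left hpi (by linarith) hab'
  have hA0 : 0 < π / (a:ℝ) := div_pos hpi (by linarith)
  have e1 : 2 * π / (a:ℝ) = 2 * (π / (a:ℝ)) := by ring
  have e2 : 2 * π / (b:ℝ) = 2 * (π / (b:ℝ)) := by ring
  refine ⟨fun β hβ => ?_, fun β hβ => ?_, fun α hα => ?_⟩
  · obtain ⟨h0, h1⟩ := hβ
    have key : f1 a b 0 β = -(cos (2 * π / (a : ℝ)) + cos β) ^ 2 * sin β ^ 2 +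
          (cos β + cos (2 * π / (b : ℝ) - 2 * β)) ^ 2 * sin (2 * π / (a : ℝ)) ^ 2 := by
      simp only [f1, B00, B11, cos_zero, mul_zero, sub_zero]
      ring
    refine ⟨key, ?_⟩
    rw [key, e1, e2]
    generalize π / (a:ℝ) = A at *
    generalize π / (b:ℝ) = B at *
    have hc : 0 ≤ cos (2 * A) + cos β := by
      have := cos_le_cos_of_nonneg_of_le_pi (x := 2 * A) (y := π - β)
        (by linarith) (by linarith) (by linarith)
      rw [cos_pi_sub] at this
      linarith
    have hs : 0 ≤ sin β := sin_nonneg_of_nonneg_of_le_pi h0 (by linarith)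
    have hb2 : 0 ≤ cos (2 * B - 2 * β) := cos_nonneg_of_mem_Icc ⟨by linarith, by linarith⟩
    have hsA : 0 < sin (2 * A) := sin_pos_of_pos_of_lt_pi (by linarith) (by linarith)
    have h2 : sin β < sin (2 * A - β) := by
      have h3 : 0 < sin (A - β) := sin_pos_of_pos_of_lt_pi (by linarith) (by linarith)
      have h4 : 0 < cos A := cos_pos_of_mem_Ioo ⟨by linarith, by linarith⟩
      have h5 := sin_sub_sin (2 * A - β) β
      rw [show (2 * A - β - β) / 2 = A - β by ring,
        show (2 * A - β + β) / 2 = A by ring] at h5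
      nlinarith [mul_pos h3 h4]
    rw [sin_sub] at h2
    have h6 : (cos (2 * A) + cos β) * sin β < (cos β + cos (2 * B - 2 * β)) * sin (2 * A) := by
      nlinarith [mul_nonneg hb2 hsA.le, mul_nonneg hs (sub_nonneg.2 (cos_le_one β))]
    have h7 := pow_lt_pow_left₀ h6 (mul_nonneg hc hs) two_ne_zero
    rw [mul_pow, mul_pow] at h7
    linarith
  · have key : f1 a b (π / (a : ℝ)) β = -(cos (π / (a : ℝ)) + cos β) ^ 2 * sin β ^ 2 := by
      simp only [f1, B00, B11, e1, sub_self, cos_zero, sin_zero]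
      ring
    refine ⟨key, ?_⟩
    rw [key]
    nlinarith [mul_nonneg (sq_nonneg (cos (π / (a : ℝ)) + cos β)) (sq_nonneg (sin β))]
  · have key : f1 a b α 0 = (cos α + cos (2 * π / (b : ℝ))) ^ 2 *
          sin (2 * π / (a : ℝ) - 2 * α) ^ 2 := by
      simp only [f1, B00, B11, mul_zero, sub_zero, cos_zero, sin_zero]
      ring
    refine ⟨key, ?_⟩
    rw [key]
    positivity
end

section
/- Let a = 2 and let b ≥ 9 be an integer. Then for every α₁ ∈ [π/3, π/2], one has f₂(α₁, 0) < 0. -/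
open Real

theorem stmt19 (b : ℤ) (hb : 9 ≤ b) :
    ∀ α₁ ∈ Set.Icc (π / 3) (π / 2), f2 2 b α₁ 0 < 0 := by
  intro α hα
  obtain ⟨h1, h2⟩ := hα
  have hb' : (9 : ℝ) ≤ (b : ℝ) := by exact_mod_cast hb
  have hpi := Real.pi_pos
  have hx0 : 0 ≤ cos α := Real.cos_nonneg_of_mem_Icc ⟨by linarith, h2⟩
  have hx1 : cos α ≤ 1 / 2 := by
    rw [← Real.cos_pi_div_three]
    exact Real.cos_le_cos_of_nonneg_of_le_pi (by linarith) (by linarith) h1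
  have hc : 3 / 4 ≤ cos (2 * π / (b : ℝ)) := by
    have ht0 : 0 ≤ 2 * π / (b : ℝ) := by positivity
    have ht1 : 2 * π / (b : ℝ) ≤ 7 / 10 := by
      rw [div_le_iff₀ (by linarith)]
      have := Real.pi_lt_d2
      linarith
    have := Real.one_sub_sq_div_two_le_cos (x := 2 * π / (b : ℝ))
    nlinarith
  have hc1 := Real.cos_le_one (2 * π / (b : ℝ))
  have hs : sin α ^ 2 = 1 - cos α ^ 2 := by rw [Real.sin_sq]
  have hs2 : sin (2 * π / (b : ℝ)) ^ 2 = 1 - cos (2 * π / (b : ℝ)) ^ 2 := by rw [Real.sin_sq]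
  have ha : cos (2 * π / ((2 : ℤ) : ℝ) - 2 * α) = 1 - 2 * cos α ^ 2 := by
    have : 2 * π / ((2 : ℤ) : ℝ) - 2 * α = π - 2 * α := by push_cast; ring
    rw [this, Real.cos_pi_sub, Real.cos_two_mul]; ring
  unfold f2 B11 B00
  rw [ha]
  simp only [mul_zero, sub_zero, Real.cos_zero]
  rw [hs, hs2]
  generalize cos α = x at *
  generalize cos (2 * π / (b : ℝ)) = c at *
  have k1 : (x + 3 / 4) ^ 2 * (1 + x) ≤ (x + c) ^ 2 * (1 + x) := by gcongr
  have k2 : (1 - x) * (1 + 2 * x) ^ 2 * (1 - c ^ 2) ≤ (1 - x) * (1 + 2 * x) ^ 2 * (7 / 16) := by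
    apply mul_le_mul_of_nonneg_left
    · nlinarith
    · apply mul_nonneg (by linarith) (sq_nonneg _)
  have k3 : (1 - x) * (1 + 2 * x) ^ 2 * (7 / 16) < (x + 3 / 4) ^ 2 * (1 + x) := by
    have : 0 ≤ x ^ 2 := by positivity
    have : 0 ≤ x ^ 3 := by positivity
    nlinarith
  have k4 : 0 < (1 - x) * ((x + c) ^ 2 * (1 + x) - (1 - x) * (1 + 2 * x) ^ 2 * (1 - c ^ 2)) :=
    mul_pos (by linarith) (by linarith)
  linarith
end
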